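/- arXiv:1612.04790 — 2 statements merged into one kernel-verified Lean document; each statement's English description precedes it below -/
import Mathlib

section
/- Let G be a 2-vertex-connected simple graph with minimum degree at least 3, let D be an open nice ear-decomposition of G with exactly φ(G) even ears, and let M be the eardrum arising from the pendant short ears of D. Let H be the spanning subgraph of G whose edge set is the union of the edge sets of the nontrivial ears of D. Then H is a 2-vertex-connected spanning subgraph of G and |E(H)| ≤ (17/12)·max(L_φ(G), L_µ(G,M)), where L_φ(G) = |V(G)| + φ(G) − 1 and L_µ(G,M) = |V(G)| + |M| − µ(G,M) − 1. -/
open SimpleGraph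

variable {V : Type*}

/-- An *ear* of a graph `G`: a walk of length at least `1` whose two endpoints may
coincide, but all of whose other vertices are distinct (from each other and from the
endpoints); i.e. the walk is an (open) path, or a cycle when the endpoints coincide. -/
structure Ear (G : SimpleGraph V) where
  a : V
  b : V
  walk : G.Walk a b
  length_pos : 1 ≤ walk.length
  ear : (a ≠ b ∧ walk.IsPath) ∨ (∃ h : a = b, (walk.copy rfl h.symm).IsCycle)

namespace Ear

variable {G : SimpleGraph V}

/-- The set of vertices of an ear. -/
def vertices (P : Ear G) : Set V := {v | v ∈ P.walk.support}

/-- The (set of) endpoints of an ear. -/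
def endpoints (P : Ear G) : Set V := {P.a, P.b}

/-- The set `in(P)` of internal vertices of an ear. -/
def internal (P : Ear G) : Set V := P.vertices \ P.endpoints

/-- The internal vertices of an ear, as a `Finset`. -/
def internalFinset [DecidableEq V] (P : Ear G) : Finset V :=
  P.walk.support.toFinset \ {P.a, P.b}

/-- The list of edges of an ear. -/
def edges (P : Ear G) : List (Sym2 V) := P.walk.edges

/-- A *trivial* ear has a single edge. -/
def IsTrivial (P : Ear G) : Prop := P.walk.length = 1

/-- A *short* ear has `2` or `3` edges. -/
def IsShort (P : Ear G) : Prop := P.walk.length = 2 ∨ P.walk.length = 3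

/-- A *long* ear has at least `4` edges. -/
def IsLong (P : Ear G) : Prop := 4 ≤ P.walk.length

/-- An *open* ear has distinct endpoints. -/
def IsOpen (P : Ear G) : Prop := P.a ≠ P.b

end Ear

/-- The trivial ear corresponding to a single edge `wy` of `G`. -/
def trivialEar (G : SimpleGraph V) {w y : V} (h : G.Adj w y) : Ear G where
  a := w
  b := y
  walk := SimpleGraph.Walk.cons h SimpleGraph.Walk.nil
  length_pos := by simp
  ear := Or.inl ⟨h.ne, by simp [h.ne]⟩

/-- The set of vertices appearing in the root or in the first `i` ears (those with
index `< i`) of a putative ear-decomposition. -/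
def priorVerts {G : SimpleGraph V} (root : V) (ears : List (Ear G)) (i : ℕ) : Set V :=
  insert root {v | ∃ j : Fin ears.length, (j : ℕ) < i ∧ v ∈ (ears.get j).vertices}

/-- An *ear-decomposition* of `G`: a root vertex `P₀` together with a sequence of ears
`P₁, …, P_k` such that each ear shares exactly its endpoints with the set of vertices
appearing earlier, and every edge of `G` lies in exactly one ear. -/
structure EarDecomp (G : SimpleGraph V) where
  root : V
  ears : List (Ear G)
  endpoints_sub : ∀ i : Fin ears.length,
    (ears.get i).endpoints ⊆ priorVerts root ears (i : ℕ)
  internal_new : ∀ i : Fin ears.length,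
    (ears.get i).internal ∩ priorVerts root ears (i : ℕ) = ∅
  edge_cover : ∀ e ∈ G.edgeSet, ∃! i : Fin ears.length, e ∈ (ears.get i).edges

namespace EarDecomp

variable {G : SimpleGraph V}

/-- An ear-decomposition is *open* if every ear except the first one is open. -/
def IsOpen (D : EarDecomp G) : Prop :=
  ∀ i : Fin D.ears.length, 1 ≤ (i : ℕ) → (D.ears.get i).IsOpen

/-- The number of even ears of an ear-decomposition. -/
def evenEars (D : EarDecomp G) : ℕ :=
  D.ears.countP fun P => decide (Even P.walk.length)

/-- The ear with index `i` is *pendant*: it is nontrivial, and no other nontrivial ear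
has an endpoint among its internal vertices. -/
def IsPendant (D : EarDecomp G) (i : Fin D.ears.length) : Prop :=
  ¬ (D.ears.get i).IsTrivial ∧
  ∀ j : Fin D.ears.length, j ≠ i → ¬ (D.ears.get j).IsTrivial →
    (D.ears.get j).a ∉ (D.ears.get i).internal ∧ (D.ears.get j).b ∉ (D.ears.get i).internal

/-- A *nice* ear-decomposition: open, all short ears are pendant, and no edge of `G`
connects internal vertices of two different short ears. -/
def IsNice (D : EarDecomp G) : Prop :=
  D.IsOpen ∧
  (∀ i : Fin D.ears.length, (D.ears.get i).IsShort → D.IsPendant i) ∧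
  (∀ i j : Fin D.ears.length, i ≠ j → (D.ears.get i).IsShort → (D.ears.get j).IsShort →
    ∀ u ∈ (D.ears.get i).internal, ∀ v ∈ (D.ears.get j).internal, ¬ G.Adj u v)

/-- The number `π` of pendant ears of an ear-decomposition. -/
noncomputable def numPendant (D : EarDecomp G) : ℕ :=
  letI := Classical.decPred fun i : Fin D.ears.length => D.IsPendant i
  (Finset.univ.filter fun i : Fin D.ears.length => D.IsPendant i).card

/-- The set `E'` of edges lying in nontrivial ears of an ear-decomposition. -/
noncomputable def nontrivialEdges [DecidableEq V] (D : EarDecomp G) : Finset (Sym2 V) :=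
  letI := Classical.decPred fun i : Fin D.ears.length => ¬ (D.ears.get i).IsTrivial
  (Finset.univ.filter fun i : Fin D.ears.length => ¬ (D.ears.get i).IsTrivial).biUnion
    fun i => (D.ears.get i).edges.toFinset

/-- The eardrum `M` arising from the pendant short ears of an ear-decomposition: for each
pendant `2`-ear its internal vertex, and for each pendant `3`-ear the pair of its internal
vertices (joined by an edge). -/
noncomputable def eardrum [DecidableEq V] (D : EarDecomp G) : Finset (Finset V) :=
  letI := Classical.decPred fun i : Fin D.ears.length =>
    (D.ears.get i).IsShort ∧ D.IsPendant i
  ((Finset.univ.filter fun i : Fin D.ears.length =>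
      (D.ears.get i).IsShort ∧ D.IsPendant i).image
    fun i => (D.ears.get i).internalFinset)

/-- The set `V_I` of internal vertices of the non-pendant ears (including the root). -/
noncomputable def VI [DecidableEq V] (D : EarDecomp G) : Finset V :=
  letI := Classical.decPred fun i : Fin D.ears.length => D.IsPendant i
  insert D.root ((Finset.univ.filter fun i : Fin D.ears.length => ¬ D.IsPendant i).biUnion
    fun i => (D.ears.get i).internalFinset)

end EarDecomp

/-- `φ(G)`: the minimum number of even ears over all ear-decompositions of `G`. -/
noncomputable def phi (G : SimpleGraph V) : ℕ :=
  sInf {n | ∃ D : EarDecomp G, D.evenEars = n}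

/-- A graph is 2-vertex-connected if it has at least `3` vertices and deleting any single
vertex leaves a connected graph. -/
def TwoVertexConnected {W : Type*} (G : SimpleGraph W) : Prop :=
  3 ≤ Nat.card W ∧ ∀ v : W, (G.induce ({v}ᶜ : Set W)).Connected

/-- `OPT_2VC(G)`: the minimum number of edges of a 2-vertex-connected spanning subgraph. -/
noncomputable def OPT2VC {W : Type*} (G : SimpleGraph W) : ℕ :=
  sInf {n | ∃ H : SimpleGraph W, H ≤ G ∧ TwoVertexConnected H ∧ H.edgeSet.ncard = n}

/-- An *eardrum* in `G`: a set of pairwise vertex-disjoint subgraphs, each consisting of a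
single vertex or a single edge (encoded by their vertex sets). -/
def IsEardrum [DecidableEq V] (G : SimpleGraph V) (M : Finset (Finset V)) : Prop :=
  (∀ f ∈ M, (∃ v, f = {v}) ∨ (∃ u v, G.Adj u v ∧ f = {u, v})) ∧
  ∀ f ∈ M, ∀ g ∈ M, f ≠ g → Disjoint f g

/-- `V(M)`: the set of vertices of the members of an eardrum. -/
def eardrumVerts (M : Finset (Finset V)) : Set V := {v | ∃ f ∈ M, v ∈ f}

/-- An *earmuff* for the eardrum `M`: a collection of paths `P_f`, for `f` in a subset
`F ⊆ M` (here given as a duplicate-free list of pairs `(f, P_f)`), such that each `P_f` is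
a path whose set of internal vertices is exactly the vertex set of `f` (containing the
edge of `f` when `f` is an edge), whose two distinct endpoints lie outside `V(M)`, and
such that the union of all the paths is a forest. -/
structure Earmuff (G : SimpleGraph V) (M : Finset (Finset V)) where
  pairs : List (Finset V × Ear G)
  nodup_fst : (pairs.map Prod.fst).Nodup
  mem_M : ∀ pr ∈ pairs, pr.1 ∈ M
  is_path : ∀ pr ∈ pairs, pr.2.a ≠ pr.2.b ∧ pr.2.walk.IsPath
  internal_eq : ∀ pr ∈ pairs, pr.2.internal = ↑pr.1
  edge_mem : ∀ pr ∈ pairs, ∀ u v : V, u ∈ pr.1 → v ∈ pr.1 → u ≠ v → s(u, v) ∈ pr.2.edges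
  ends_outside : ∀ pr ∈ pairs, pr.2.a ∉ eardrumVerts M ∧ pr.2.b ∉ eardrumVerts M
  forest : (SimpleGraph.fromEdgeSet {e : Sym2 V | ∃ pr ∈ pairs, e ∈ pr.2.edges}).IsAcyclic

/-- `µ(G, M)`: the maximum size of an earmuff for `M` in `G`. -/
noncomputable def mu (G : SimpleGraph V) (M : Finset (Finset V)) : ℕ :=
  sSup {n | ∃ em : Earmuff G M, em.pairs.length = n}

section Helpers

theorem hp_forest_card [Fintype V] [DecidableEq V] (F : SimpleGraph V) (hF : F.IsAcyclic)
    (W : Finset V) (hW : W.Nonempty) (E : Finset (Sym2 V))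
    (hE : ∀ e ∈ E, e ∈ F.edgeSet ∧ ∀ x ∈ e, x ∈ W) : E.card + 1 ≤ W.card := by
  classical
  have hac : (F.induce (W : Set V)).IsAcyclic := hF.induce _
  haveI : Nonempty (W : Set V) := by
    obtain ⟨x, hx⟩ := hW
    exact ⟨⟨x, hx⟩⟩
  obtain ⟨T, hT1, -, hT2⟩ := (connected_top (V := (W : Set V))).exists_isTree_le_of_le_of_isAcyclic
    le_top hac
  have hc := hT2.card_edgeFinset
  have hWc : Fintype.card (W : Set V) = W.card := by simp
  rw [hWc] at hc
  rw [← hc]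
  have hsub : E ⊆ T.edgeFinset.image (Sym2.map Subtype.val) := by
    intro e he
    obtain ⟨h1, h2⟩ := hE e he
    induction e using Sym2.ind with
    | _ x y =>
      have hx : x ∈ W := h2 x (by simp)
      have hy : y ∈ W := h2 y (by simp)
      refine Finset.mem_image.2 ⟨s(⟨x, hx⟩, ⟨y, hy⟩), ?_, by simp⟩
      rw [mem_edgeFinset, mem_edgeSet]
      apply hT1
      simpa using h1
  have := (Finset.card_le_card hsub).trans Finset.card_image_le
  omega

theorem hp_mem_internal [DecidableEq V] {G : SimpleGraph V} (P : Ear G) (x : V) :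
    x ∈ P.internalFinset ↔ x ∈ P.internal := by
  simp [Ear.internalFinset, Ear.internal, Ear.vertices, Ear.endpoints]

theorem hp_path_card [DecidableEq V] {G : SimpleGraph V} (P : Ear G) (hab : P.a ≠ P.b)
    (hp : P.walk.IsPath) : P.internalFinset.card + 1 = P.walk.length := by
  unfold Ear.internalFinset
  have h1 : P.walk.support.toFinset.card = P.walk.length + 1 := by
    rw [List.toFinset_card_of_nodup hp.support_nodup, Walk.length_support]
  rw [Finset.card_sdiff_of_subset, h1, Finset.card_pair hab]
  · have := P.length_pos
    omega
  · intro x hx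
    simp only [Finset.mem_insert, Finset.mem_singleton] at hx
    rcases hx with rfl | rfl <;> simp

theorem hp_internal_card [DecidableEq V] {G : SimpleGraph V} (P : Ear G) :
    P.internalFinset.card + 1 = P.walk.length := by
  rcases P.ear with ⟨hab, hp⟩ | ⟨h, hc⟩
  · exact hp_path_card P hab hp
  · unfold Ear.internalFinset
    obtain ⟨a, b, w, hl, he⟩ := P
    dsimp only at h hc ⊢
    subst h
    simp only [Walk.copy_rfl_rfl] at hc
    have h1 : w.support.toFinset.card = w.length := by
      have h2 : w.support.toFinset = w.support.tail.toFinset := by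
        rw [← Walk.cons_tail_support, List.tail_cons, List.toFinset_cons]
        apply Finset.insert_eq_of_mem
        rw [List.mem_toFinset]
        exact w.end_mem_tail_support hc.not_nil
      rw [h2, List.toFinset_card_of_nodup hc.support_nodup, List.length_tail, Walk.length_support]
      rfl
    rw [Finset.card_sdiff_of_subset, h1]
    · simp
      omega
    · intro x hx
      simp only [Finset.mem_insert, Finset.mem_singleton] at hx
      rcases hx with rfl | rfl <;> simp

theorem hp_countP {α : Type*} (l : List α) (p : α → Bool) :
    (∑ i : Fin l.length, if p (l.get i) then 1 else 0) = l.countP p := by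
  induction l with
  | nil => simp
  | cons a l ih =>
    rw [List.countP_cons, ← ih]
    erw [Fin.sum_univ_succ]
    simp [add_comm]
    rfl

theorem hp_edge_hits {G : SimpleGraph V} (P : Ear G) (hp : P.walk.IsPath)
    (hl : 2 ≤ P.walk.length) (e : Sym2 V) (he : e ∈ P.walk.edges) :
    ∃ x ∈ e, x ∈ P.internal := by
  induction e using Sym2.ind with
  | _ x y =>
    by_contra hcon
    push Not at hcon
    have hx := hcon x (by simp)
    have hy := hcon y (by simp)
    have hxs := P.walk.fst_mem_support_of_mem_edges he
    have hys := P.walk.snd_mem_support_of_mem_edges he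
    have hxy := (P.walk.adj_of_mem_edges he).ne
    simp only [Ear.internal, Ear.vertices, Ear.endpoints, Set.mem_diff, Set.mem_setOf_eq, hxs, hys,
      true_and, not_not, Set.mem_insert_iff, Set.mem_singleton_iff] at hx hy
    have : s(P.a, P.b) ∈ P.walk.edges := by
      rcases hx with rfl | rfl <;> rcases hy with rfl | rfl
      · exact absurd rfl hxy
      · exact he
      · rw [Sym2.eq_swap]; exact he
      · exact absurd rfl hxy
    have := hp.length_eq_one_of_mem_edges this
    omega

theorem hp_earmuff [Fintype V] [DecidableEq V] {G : SimpleGraph V} (M : Finset (Finset V))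
    (hne : ∀ f ∈ M, f.Nonempty) (hdisj : ∀ f ∈ M, ∀ g ∈ M, f ≠ g → Disjoint f g)
    (r : V) (hr : r ∉ eardrumVerts M) (em : Earmuff G M) :
    em.pairs.length + ∑ f ∈ M, f.card + 1 ≤ Fintype.card V := by
  classical
  have hnd : em.pairs.Nodup := List.Nodup.of_map _ em.nodup_fst
  have hinj : ∀ p ∈ em.pairs, ∀ q ∈ em.pairs, p.1 = q.1 → p = q :=
    fun p hp q hq h => List.inj_on_of_nodup_map em.nodup_fst hp hq h
  set Q := em.pairs.toFinset with hQ
  set F := Q.image Prod.fst with hFdef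
  have hFM : F ⊆ M := by
    intro f hf
    simp only [hFdef, hQ, Finset.mem_image, List.mem_toFinset] at hf
    obtain ⟨p, hp, rfl⟩ := hf
    exact em.mem_M p hp
  set W : Finset V := Finset.univ \ (M \ F).biUnion id with hWdef
  have hint : ∀ p ∈ em.pairs, p.2.internalFinset = p.1 := by
    intro p hp
    ext x
    rw [hp_mem_internal, em.internal_eq p hp]
    simp
  have hlen : ∀ p ∈ em.pairs, p.1.card + 1 = p.2.walk.length := by
    intro p hp
    rw [← hp_internal_card, hint p hp]
  have hsupp : ∀ p ∈ em.pairs, ∀ x ∈ p.2.walk.support, x ∈ p.1 ∨ x ∉ eardrumVerts M := by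
    intro p hp x hx
    by_cases hxi : x ∈ p.1
    · exact Or.inl hxi
    · right
      have h1 : x ∉ p.2.internal := by
        rw [em.internal_eq p hp]; simpa using hxi
      simp only [Ear.internal, Ear.vertices, Ear.endpoints, Set.mem_diff, Set.mem_setOf_eq, hx,
        true_and, not_not, Set.mem_insert_iff, Set.mem_singleton_iff] at h1
      rcases h1 with rfl | rfl
      · exact (em.ends_outside p hp).1
      · exact (em.ends_outside p hp).2
  set E : Finset (Sym2 V) := Q.biUnion fun p => p.2.walk.edges.toFinset with hEdef
  have hsub : ∀ e ∈ E, e ∈ (SimpleGraph.fromEdgeSet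
      {e : Sym2 V | ∃ pr ∈ em.pairs, e ∈ pr.2.edges}).edgeSet ∧ ∀ x ∈ e, x ∈ W := by
    intro e he
    simp only [hEdef, hQ, Finset.mem_biUnion, List.mem_toFinset] at he
    obtain ⟨p, hp, he⟩ := he
    constructor
    · rw [edgeSet_fromEdgeSet]
      refine ⟨⟨p, hp, he⟩, ?_⟩
      exact G.not_isDiag_of_mem_edgeSet (p.2.walk.edges_subset_edgeSet he)
    · intro x hx
      have hxs : x ∈ p.2.walk.support := Walk.mem_support_of_mem_edges he hx
      simp only [hWdef, Finset.mem_sdiff, Finset.mem_univ, true_and, Finset.mem_biUnion, id]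
      rintro ⟨g, ⟨hgM, hgF⟩, hxg⟩
      rcases hsupp p hp x hxs with h | h
      · have hpF : p.1 ∈ F := Finset.mem_image_of_mem _ (List.mem_toFinset.2 hp)
        have hne' : p.1 ≠ g := fun h => hgF (h ▸ hpF)
        exact Finset.disjoint_left.1 (hdisj _ (em.mem_M p hp) _ hgM hne') h hxg
      · exact h ⟨g, hgM, hxg⟩
  have hrW : r ∈ W := by
    simp only [hWdef, Finset.mem_sdiff, Finset.mem_univ, true_and, Finset.mem_biUnion, id]
    rintro ⟨g, ⟨hgM, -⟩, hxg⟩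
    exact hr ⟨g, hgM, hxg⟩
  have hmain := hp_forest_card _ em.forest W ⟨r, hrW⟩ E hsub
  have hEcard : E.card = ∑ p ∈ Q, (p.1.card + 1) := by
    rw [hEdef, Finset.card_biUnion]
    · apply Finset.sum_congr rfl
      intro p hp
      have hp' := List.mem_toFinset.1 hp
      rw [List.toFinset_card_of_nodup (em.is_path p hp').2.isTrail.edges_nodup, Walk.length_edges,
        hlen p hp']
    · intro p hp q hq hpq
      have hp := List.mem_toFinset.1 hp
      have hq := List.mem_toFinset.1 hq
      refine Finset.disjoint_left.2 ?_
      intro e hep heq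
      rw [List.mem_toFinset] at hep heq
      have h2 : 2 ≤ p.2.walk.length := by
        rw [← hlen p hp]
        have := (hne _ (em.mem_M p hp)).card_pos
        omega
      obtain ⟨x, hxe, hxi⟩ := hp_edge_hits p.2 (em.is_path p hp).2 h2 e hep
      rw [em.internal_eq p hp] at hxi
      have hxs : x ∈ q.2.walk.support := Walk.mem_support_of_mem_edges heq hxe
      rcases hsupp q hq x hxs with h | h
      · have hne' : p.1 ≠ q.1 := fun h => hpq (hinj p hp q hq h)
        exact Finset.disjoint_left.1 (hdisj _ (em.mem_M p hp) _ (em.mem_M q hq) hne') hxi h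
      · exact h ⟨p.1, em.mem_M p hp, hxi⟩
  have hsumF : ∑ p ∈ Q, (p.1.card + 1) = ∑ f ∈ F, f.card + em.pairs.length := by
    rw [Finset.sum_add_distrib, hFdef, Finset.sum_image]
    · simp [hQ, List.toFinset_card_of_nodup hnd]
    · intro p hp q hq h
      exact hinj p (List.mem_toFinset.1 hp) q (List.mem_toFinset.1 hq) h
  have hWcard : W.card + ∑ f ∈ M \ F, f.card = Fintype.card V := by
    have h1 : ((M \ F).biUnion id).card = ∑ f ∈ M \ F, f.card := by
      rw [Finset.card_biUnion]
      · rfl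
      · intro f hf g hg hfg
        exact hdisj f (Finset.mem_sdiff.1 hf).1 g (Finset.mem_sdiff.1 hg).1 hfg
    rw [← h1, hWdef, Finset.card_sdiff_add_card_eq_card (Finset.subset_univ _), Finset.card_univ]
  have hsplit := Finset.sum_sdiff (f := Finset.card) hFM
  omega

theorem hp_internal_disjoint {G : SimpleGraph V} (D : EarDecomp G) (i j : Fin D.ears.length)
    (hij : i ≠ j) (x : V) (hi : x ∈ (D.ears.get i).internal) (hj : x ∈ (D.ears.get j).internal) :
    False := by
  wlog h : i < j generalizing i j
  · exact this j i hij.symm hj hi (lt_of_le_of_ne (not_lt.1 h) hij.symm)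
  have : x ∈ (D.ears.get j).internal ∩ priorVerts D.root D.ears (j : ℕ) :=
    ⟨hj, Or.inr ⟨i, h, hi.1⟩⟩
  rw [D.internal_new j] at this
  exact this

theorem hp_root {G : SimpleGraph V} (D : EarDecomp G) (i : Fin D.ears.length) :
    D.root ∉ (D.ears.get i).internal := by
  intro h
  have : D.root ∈ (D.ears.get i).internal ∩ priorVerts D.root D.ears (i : ℕ) :=
    ⟨h, Or.inl rfl⟩
  rw [D.internal_new i] at this
  exact this

theorem hp_bound [Fintype V] [DecidableEq V] {G : SimpleGraph V} (D : EarDecomp G)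
    (hnice : D.IsNice) :
    12 * D.nontrivialEdges.card + 2 * mu G D.eardrum + 17 ≤
      17 * Fintype.card V + 15 * D.evenEars + 2 * D.eardrum.card := by
  classical
  set ℓ : Fin D.ears.length → ℕ := fun i => (D.ears.get i).walk.length with hℓ
  set I : Fin D.ears.length → Finset V := fun i => (D.ears.get i).internalFinset with hI
  have hIℓ : ∀ i, (I i).card + 1 = ℓ i := fun i => hp_internal_card _
  have hIdisj : ∀ i j, i ≠ j → Disjoint (I i) (I j) := by
    intro i j hij
    rw [Finset.disjoint_left]
    intro x hx hy
    exact hp_internal_disjoint D i j hij x ((hp_mem_internal _ _).1 hx) ((hp_mem_internal _ _).1 hy)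
  set S := Finset.univ.filter fun i => (D.ears.get i).IsShort with hS
  have hSM : D.eardrum = S.image I := by
    unfold EarDecomp.eardrum
    ext f
    simp only [Finset.mem_image, Finset.mem_filter, Finset.mem_univ, true_and, hS, hI]
    constructor
    · rintro ⟨i, ⟨h1, -⟩, h⟩
      exact ⟨i, h1, h⟩
    · rintro ⟨i, h1, h⟩
      exact ⟨i, ⟨h1, hnice.2.1 i h1⟩, h⟩
  have hSne : ∀ i ∈ S, (I i).Nonempty := by
    intro i hi
    have h1 : ℓ i = 2 ∨ ℓ i = 3 := (Finset.mem_filter.1 hi).2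
    have := hIℓ i
    rw [← Finset.card_pos]
    omega
  have hSinj : Set.InjOn I (S : Set (Fin D.ears.length)) := by
    intro i hi j hj hij
    by_contra hne
    have := hIdisj i j hne
    rw [hij, disjoint_self] at this
    exact (hSne j hj).ne_empty this
  have hMcard : D.eardrum.card = S.card := by
    rw [hSM, Finset.card_image_of_injOn hSinj]
  have hMsum : ∑ f ∈ D.eardrum, f.card = ∑ i ∈ S, (I i).card := by
    rw [hSM, Finset.sum_image hSinj]
  have hmu : mu G D.eardrum + ∑ i ∈ S, (I i).card + 1 ≤ Fintype.card V := by
    have hb : ∀ em : Earmuff G D.eardrum,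
        em.pairs.length + ∑ i ∈ S, (I i).card + 1 ≤ Fintype.card V := by
      intro em
      rw [← hMsum]
      apply hp_earmuff D.eardrum _ _ D.root _ em
      · intro f hf
        rw [hSM] at hf
        obtain ⟨i, hi, rfl⟩ := Finset.mem_image.1 hf
        exact hSne i hi
      · intro f hf g hg hfg
        rw [hSM] at hf hg
        obtain ⟨i, hi, rfl⟩ := Finset.mem_image.1 hf
        obtain ⟨j, hj, rfl⟩ := Finset.mem_image.1 hg
        exact hIdisj i j (fun h => hfg (by rw [h]))
      · rintro ⟨f, hf, hx⟩
        rw [hSM] at hf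
        obtain ⟨i, hi, rfl⟩ := Finset.mem_image.1 hf
        exact hp_root D i ((hp_mem_internal _ _).1 hx)
    have hne : {n | ∃ em : Earmuff G D.eardrum, em.pairs.length = n}.Nonempty :=
      ⟨0, ⟨[], by simp, by simp, by simp, by simp, by simp, by simp, by simp⟩, rfl⟩
    obtain ⟨em, hem⟩ := Nat.sSup_mem hne ⟨Fintype.card V, by
      rintro n ⟨em, rfl⟩
      have := hb em
      omega⟩
    have := hb em
    rw [hem] at this
    exact this
  have hall : ∑ i, (I i).card + 1 ≤ Fintype.card V := by
    have h1 : (Finset.univ.biUnion I).card = ∑ i, (I i).card := by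
      rw [Finset.card_biUnion]
      intro i _ j _ hij
      exact hIdisj i j hij
    rw [← h1]
    have h2 : D.root ∉ Finset.univ.biUnion I := by
      simp only [Finset.mem_biUnion, Finset.mem_univ, true_and, not_exists]
      intro i hx
      exact hp_root D i ((hp_mem_internal _ _).1 hx)
    rw [← Finset.card_insert_of_notMem h2]
    exact Finset.card_le_univ _
  have heven : D.evenEars = ∑ i, if Even (ℓ i) then 1 else 0 := by
    unfold EarDecomp.evenEars
    rw [← hp_countP]
    simp [hℓ]
  have hedges : D.nontrivialEdges.card ≤ ∑ i, if ℓ i = 1 then 0 else ℓ i := by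
    unfold EarDecomp.nontrivialEdges
    refine Finset.card_biUnion_le.trans ?_
    rw [Finset.sum_filter]
    apply Finset.sum_le_sum
    intro i _
    have h1 : (D.ears.get i).edges.toFinset.card ≤ ℓ i :=
      (List.toFinset_card_le _).trans (by simp [Ear.edges, hℓ])
    by_cases h : ℓ i = 1
    · have h' : (D.ears.get i).IsTrivial := h
      rw [if_neg (not_not.2 h')]
      exact Nat.zero_le _
    · have h' : ¬ (D.ears.get i).IsTrivial := h
      rw [if_pos h', if_neg h]
      exact h1
  have hScard : S.card = ∑ i, if ℓ i = 2 ∨ ℓ i = 3 then 1 else 0 := by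
    rw [hS, Finset.card_filter]
    refine Finset.sum_congr rfl fun i _ => ?_
    congr 1
  have hSsum : ∑ i ∈ S, (I i).card = ∑ i, if ℓ i = 2 ∨ ℓ i = 3 then (I i).card else 0 := by
    rw [hS, Finset.sum_filter]
    refine Finset.sum_congr rfl fun i _ => ?_
    congr 1
  have hkey : 12 * (∑ i, if ℓ i = 1 then 0 else ℓ i) ≤ 15 * ∑ i, (I i).card +
      15 * (∑ i, if Even (ℓ i) then 1 else 0) + 2 * (∑ i, if ℓ i = 2 ∨ ℓ i = 3 then 1 else 0) +
      2 * (∑ i, if ℓ i = 2 ∨ ℓ i = 3 then (I i).card else 0) := by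
    simp only [Finset.mul_sum, ← Finset.sum_add_distrib]
    apply Finset.sum_le_sum
    intro i _
    have := hIℓ i
    by_cases h1 : ℓ i = 1
    · simp [h1]
    by_cases h2 : ℓ i = 2
    · have : (I i).card = 1 := by omega
      simp [h2, this]
    by_cases h3 : ℓ i = 3
    · have : (I i).card = 2 := by omega
      simp [h3, this]
    by_cases h4 : ℓ i = 4
    · have h5 : (I i).card = 3 := by omega
      have : Even 4 := by decide
      simp [h4, h5, this]
    · rw [if_neg h1]
      have : ∀ a b c : ℕ, 12 * ℓ i ≤ 15 * (I i).card + a + b + c := by intro a b c; omega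
      exact this _ _ _
  rw [← hSsum, ← hScard, ← heven, ← hMcard] at hkey
  omega

theorem hp_reach [DecidableEq V] {G H : SimpleGraph V} {a b : V} (p : G.Walk a b) (hp : p.IsPath)
    (hH : ∀ e ∈ p.edges, e ∈ H.edgeSet) (v x : V) (hxv : x ≠ v) (hx : x ∈ p.support) :
    ∃ y, (y = a ∨ y = b) ∧ ∃ q : H.Walk x y, v ∉ q.support := by
  have hH' : ∀ e ∈ (p.takeUntil x hx).edges, e ∈ H.edgeSet :=
    fun e he => hH e (p.edges_takeUntil_subset hx he)
  have hH'' : ∀ e ∈ (p.dropUntil x hx).edges, e ∈ H.edgeSet :=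
    fun e he => hH e (p.edges_dropUntil_subset hx he)
  by_cases h1 : v ∈ (p.takeUntil x hx).support
  · refine ⟨b, Or.inr rfl, (p.dropUntil x hx).transfer H hH'', ?_⟩
    rw [Walk.support_transfer]
    intro h2
    have hp' := hp
    rw [← p.take_spec hx] at hp'
    exact hp'.ne_of_mem_support_of_append hxv.symm h1 h2 rfl
  · refine ⟨a, Or.inl rfl, ((p.takeUntil x hx).transfer H hH').reverse, ?_⟩
    simpa using h1

theorem hp_prior {G : SimpleGraph V} (D : EarDecomp G) (i : Fin D.ears.length) :
    priorVerts D.root D.ears ((i : ℕ) + 1) =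
      priorVerts D.root D.ears (i : ℕ) ∪ (D.ears.get i).vertices := by
  ext x
  simp only [priorVerts, Set.mem_insert_iff, Set.mem_setOf_eq, Set.mem_union]
  constructor
  · rintro (h | ⟨j, hj, hx⟩)
    · exact Or.inl (Or.inl h)
    · rcases Nat.lt_succ_iff_lt_or_eq.1 hj with h | h
      · exact Or.inl (Or.inr ⟨j, h, hx⟩)
      · right
        have : j = i := Fin.ext h
        rwa [← this]
  · rintro ((h | ⟨j, hj, hx⟩) | hx)
    · exact Or.inl h
    · exact Or.inr ⟨j, by omega, hx⟩
    · exact Or.inr ⟨i, by omega, hx⟩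

/-- connected inside `H` avoiding `v` -/
def HpR (H : SimpleGraph V) (v x y : V) : Prop := ∃ q : H.Walk x y, v ∉ q.support

theorem HpR.symm {H : SimpleGraph V} {v x y : V} (h : HpR H v x y) : HpR H v y x := by
  obtain ⟨q, hq⟩ := h
  exact ⟨q.reverse, by simpa using hq⟩

theorem HpR.trans {H : SimpleGraph V} {v x y z : V} (h : HpR H v x y) (h' : HpR H v y z) :
    HpR H v x z := by
  obtain ⟨q, hq⟩ := h
  obtain ⟨q', hq'⟩ := h'
  exact ⟨q.append q', by simp [Walk.mem_support_append_iff, hq, hq']⟩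

theorem HpR.ne {H : SimpleGraph V} {v x y : V} (h : HpR H v x y) : y ≠ v := by
  obtain ⟨q, hq⟩ := h
  rintro rfl
  exact hq q.end_mem_support

theorem hp_closed [DecidableEq V] {G H : SimpleGraph V} {a : V} (w : G.Walk a a) (hw : w.IsCycle)
    (hH : ∀ e ∈ w.edges, e ∈ H.edgeSet) (v x y : V) (hx : x ∈ w.support) (hy : y ∈ w.support)
    (hxv : x ≠ v) (hyv : y ≠ v) : HpR H v x y := by
  cases w with
  | nil => exact absurd rfl hw.ne_nil
  | @cons _ c _ h q =>
    rw [Walk.cons_isCycle_iff] at hw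
    have hH' : ∀ e ∈ q.edges, e ∈ H.edgeSet := fun e he => hH e (by simp [he])
    have hac : H.Adj a c := hH s(a, c) (by simp)
    have hmem : ∀ z ∈ (Walk.cons h q).support, z ∈ q.support := by
      intro z hz
      rw [Walk.support_cons, List.mem_cons] at hz
      rcases hz with rfl | hz
      · exact q.end_mem_support
      · exact hz
    obtain ⟨y1, h1, r1⟩ := hp_reach q hw.1 hH' v x hxv (hmem x hx)
    obtain ⟨y2, h2, r2⟩ := hp_reach q hw.1 hH' v y hyv (hmem y hy)
    have r1 : HpR H v x y1 := r1
    have r2 : HpR H v y y2 := r2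
    have n1 := r1.ne
    have n2 := r2.ne
    refine r1.trans (HpR.trans ?_ r2.symm)
    rcases h1 with rfl | rfl <;> rcases h2 with rfl | rfl
    · exact ⟨Walk.nil, by simpa using n1.symm⟩
    · exact ⟨Walk.cons hac.symm Walk.nil, by simpa using ⟨n1.symm, n2.symm⟩⟩
    · exact ⟨Walk.cons hac Walk.nil, by simpa using ⟨n1.symm, n2.symm⟩⟩
    · exact ⟨Walk.nil, by simpa using n1.symm⟩

theorem hp_conn [DecidableEq V] {G : SimpleGraph V} (D : EarDecomp G) (hopen : D.IsOpen) (v : V)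
    (i : ℕ) (hi : i ≤ D.ears.length) :
    ∀ x ∈ priorVerts D.root D.ears i, ∀ y ∈ priorVerts D.root D.ears i, x ≠ v → y ≠ v →
      HpR (SimpleGraph.fromEdgeSet (↑D.nontrivialEdges : Set (Sym2 V))) v x y := by
  classical
  induction i with
  | zero =>
    intro x hx y hy hxv hyv
    simp [priorVerts] at hx hy
    subst hx; subst hy
    exact ⟨Walk.nil, by simpa using hxv.symm⟩
  | succ i ih =>
    have ih := ih (by omega)
    obtain ⟨k, hk⟩ : ∃ k : Fin D.ears.length, (k : ℕ) = i := ⟨⟨i, by omega⟩, rfl⟩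
    subst hk
    rw [hp_prior]
    have hends := D.endpoints_sub k
    have ha : (D.ears.get k).a ∈ priorVerts D.root D.ears k := hends (by simp [Ear.endpoints])
    have hb : (D.ears.get k).b ∈ priorVerts D.root D.ears k := hends (by simp [Ear.endpoints])
    by_cases htriv : (D.ears.get k).IsTrivial
    · have hsub : (D.ears.get k).vertices ⊆ priorVerts D.root D.ears k := by
        intro x hx
        have hcard := hp_internal_card (D.ears.get k)
        have h1 : (D.ears.get k).walk.length = 1 := htriv
        have h0 : (D.ears.get k).internalFinset = ∅ := by
          rw [← Finset.card_eq_zero]; omega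
        have h2 : x ∉ (D.ears.get k).internal := by
          rw [← hp_mem_internal, h0]; simp
        apply hends
        by_contra h3
        exact h2 ⟨hx, h3⟩
      rw [Set.union_eq_self_of_subset_right hsub]
      exact ih
    · have hH : ∀ e ∈ (D.ears.get k).walk.edges,
          e ∈ (SimpleGraph.fromEdgeSet (↑D.nontrivialEdges : Set (Sym2 V))).edgeSet := by
        intro e he
        rw [edgeSet_fromEdgeSet]
        refine ⟨?_, G.not_isDiag_of_mem_edgeSet (Walk.edges_subset_edgeSet _ he)⟩
        simp only [EarDecomp.nontrivialEdges, Finset.mem_coe, Finset.mem_biUnion,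
          Finset.mem_filter, Finset.mem_univ, true_and, List.mem_toFinset]
        exact ⟨k, htriv, he⟩
      generalize hP : D.ears.get k = P at *
      rcases P.ear with ⟨hab, hp⟩ | ⟨hab, hc⟩
      · have hred : ∀ x ∈ priorVerts D.root D.ears k ∪ P.vertices, x ≠ v →
            ∃ z ∈ priorVerts D.root D.ears k,
              HpR (SimpleGraph.fromEdgeSet (↑D.nontrivialEdges : Set (Sym2 V))) v x z := by
          rintro x (hx | hx) hxv
          · exact ⟨x, hx, Walk.nil, by simpa using hxv.symm⟩
          · obtain ⟨z, hz, r⟩ := hp_reach P.walk hp hH v x hxv hx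
            refine ⟨z, ?_, r⟩
            rcases hz with rfl | rfl
            · exact ha
            · exact hb
        intro x hx y hy hxv hyv
        obtain ⟨z, hz, r⟩ := hred x hx hxv
        obtain ⟨z', hz', r'⟩ := hred y hy hyv
        exact r.trans ((ih z hz z' hz' r.ne r'.ne).trans r'.symm)
      · have hk0 : (k : ℕ) = 0 := by
          by_contra h
          have := hopen k (by omega)
          rw [hP] at this
          exact this hab
        have hsub : priorVerts D.root D.ears k ⊆ P.vertices := by
          intro x hx
          rw [hk0] at hx ha
          simp [priorVerts] at hx ha
          rw [hx, ← ha]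
          exact P.walk.start_mem_support
        rw [Set.union_eq_self_of_subset_left hsub]
        intro x hx y hy hxv hyv
        refine hp_closed (P.walk.copy rfl hab.symm) hc ?_ v x y ?_ ?_ hxv hyv
        · simpa using hH
        · rw [Walk.support_copy]; exact hx
        · rw [Walk.support_copy]; exact hy

end Helpers

/-- For an open nice ear-decomposition `D` with exactly `φ(G)` even ears
of a 2-vertex-connected graph `G` of minimum degree at least `3`, the spanning subgraph
`H` of `G` formed by the edges of the nontrivial ears of `D` is 2-vertex-connected and has
at most `(17/12)·max(L_φ(G), L_µ(G,M))` edges, where `M` is the eardrum arising from the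
pendant short ears of `D`. -/
theorem statement_11 {V : Type*} [Fintype V] [DecidableEq V] (G : SimpleGraph V)
    [DecidableRel G.Adj]
    (h2 : TwoVertexConnected G) (hdeg : ∀ v : V, 3 ≤ G.degree v)
    (D : EarDecomp G) (hnice : D.IsNice) (hmin : D.evenEars = phi G) :
    SimpleGraph.fromEdgeSet (↑D.nontrivialEdges : Set (Sym2 V)) ≤ G ∧
    TwoVertexConnected (SimpleGraph.fromEdgeSet (↑D.nontrivialEdges : Set (Sym2 V))) ∧
    (D.nontrivialEdges.card : ℚ) ≤ 17/12 *
      max ((Fintype.card V : ℚ) + (phi G : ℚ) - 1)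
        ((Fintype.card V : ℚ) + (D.eardrum.card : ℚ) - (mu G D.eardrum : ℚ) - 1) := by
  classical
  refine ⟨?_, ⟨h2.1, ?_⟩, ?_⟩
  · intro x y hxy
    rw [fromEdgeSet_adj] at hxy
    have h := hxy.1
    simp only [EarDecomp.nontrivialEdges, Finset.mem_coe, Finset.mem_biUnion,
      Finset.mem_filter, Finset.mem_univ, true_and, List.mem_toFinset] at h
    obtain ⟨k, -, he⟩ := h
    exact Walk.adj_of_mem_edges _ he
  · intro v
    have hcov : ∀ x, x ∈ priorVerts D.root D.ears D.ears.length := by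
      intro x
      have hd := hdeg x
      have : 0 < G.degree x := by omega
      obtain ⟨y, hy⟩ := (G.degree_pos_iff_exists_adj x).1 this
      obtain ⟨k, hk, -⟩ := D.edge_cover s(x, y) hy
      exact Or.inr ⟨k, k.2, Walk.fst_mem_support_of_mem_edges _ hk⟩
    haveI : Nonempty (({v}ᶜ : Set V)) := (h2.2 v).nonempty
    refine ⟨?_⟩
    rintro ⟨x, hx⟩ ⟨y, hy⟩
    obtain ⟨q, hq⟩ := hp_conn D hnice.1 v D.ears.length le_rfl x (hcov x) y (hcov y) hx hy
    exact ⟨q.induce _ (by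
      intro z hz
      simp only [Set.mem_compl_iff, Set.mem_singleton_iff]
      rintro rfl
      exact hq hz)⟩
  · have hb := hp_bound D hnice
    rw [hmin] at hb
    have hb' : (12 : ℚ) * D.nontrivialEdges.card + 2 * mu G D.eardrum + 17 ≤
      17 * Fintype.card V + 15 * phi G + 2 * D.eardrum.card := by exact_mod_cast hb
    have h1 := le_max_left ((Fintype.card V : ℚ) + (phi G : ℚ) - 1)
        ((Fintype.card V : ℚ) + (D.eardrum.card : ℚ) - (mu G D.eardrum : ℚ) - 1)
    have h3 := le_max_right ((Fintype.card V : ℚ) + (phi G : ℚ) - 1)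
        ((Fintype.card V : ℚ) + (D.eardrum.card : ℚ) - (mu G D.eardrum : ℚ) - 1)
    linarith
end

section
/- Let G be a 2-vertex-connected simple graph with minimum degree at least 3, and let D be an open nice ear-decomposition of G with exactly φ(G) even ears. Let H be the spanning subgraph of G whose edge set is the union of the edge sets of the nontrivial ears of D. Then H is a 2-vertex-connected spanning subgraph of G with |E(H)| ≤ (17/12)·OPT_2VC(G). -/
open SimpleGraph

variable {V : Type*}

section Helpers

theorem Ear.card_internalFinset' {V : Type*} [DecidableEq V] {G : SimpleGraph V} (P : Ear G) :
    P.internalFinset.card = P.walk.length - 1 := by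
  obtain ⟨a, b, w, hl, h⟩ := P
  rcases h with ⟨hab, hp⟩ | ⟨hab, hc⟩
  · simp only [Ear.internalFinset]
    rw [Finset.card_sdiff_of_subset, List.toFinset_card_of_nodup hp.support_nodup,
      Walk.length_support, Finset.card_pair hab]
    · omega
    · intro x hx
      simp only [Finset.mem_insert, Finset.mem_singleton] at hx
      rcases hx with rfl | rfl <;> simp
  · subst hab
    simp only [Walk.copy_rfl_rfl] at hc
    simp only [Ear.internalFinset]
    have h1 : w.support.toFinset = w.support.tail.toFinset := by
      ext x
      simp only [List.mem_toFinset]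
      constructor
      · intro hx
        rw [Walk.mem_support_iff] at hx
        rcases hx with rfl | hx
        · exact Walk.end_mem_tail_support hc.not_nil
        · exact hx
      · exact List.mem_of_mem_tail
    rw [h1, Finset.card_sdiff_of_subset, List.toFinset_card_of_nodup hc.support_nodup]
    · simp
    · intro x hx
      simp only [Finset.mem_insert, Finset.mem_singleton, or_self] at hx
      subst hx
      simpa using Walk.end_mem_tail_support hc.not_nil

theorem Ear.mem_internalFinset' {V : Type*} [DecidableEq V] {G : SimpleGraph V} (P : Ear G) (v : V) :
    v ∈ P.internalFinset ↔ v ∈ P.internal := by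
  simp [Ear.internalFinset, Ear.internal, Ear.vertices, Ear.endpoints]

inductive EarSeq {V : Type*} [DecidableEq V] (G : SimpleGraph V) (r : V) :
    List (Ear G) → Finset V → Prop
  | nil : EarSeq G r [] {r}
  | snoc (L : List (Ear G)) (S : Finset V) (P : Ear G) : EarSeq G r L S → P.a ∈ S → P.b ∈ S →
      Disjoint P.internalFinset S → EarSeq G r (L ++ [P]) (S ∪ P.walk.support.toFinset)

theorem EarSeq.mem_iff {V : Type*} [DecidableEq V] {G : SimpleGraph V} {r : V}
    {L : List (Ear G)} {S : Finset V} (h : EarSeq G r L S) (v : V) :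
    v ∈ S ↔ v = r ∨ ∃ P ∈ L, v ∈ P.walk.support := by
  induction h with
  | nil => simp
  | snoc L S P h ha hb hd ih =>
    simp only [Finset.mem_union, ih, List.mem_toFinset, List.mem_append, List.mem_singleton]
    constructor
    · rintro ((h | ⟨Q, hQ, h⟩) | h)
      · exact Or.inl h
      · exact Or.inr ⟨Q, Or.inl hQ, h⟩
      · exact Or.inr ⟨P, Or.inr rfl, h⟩
    · rintro (h | ⟨Q, hQ | rfl, h⟩)
      · exact Or.inl (Or.inl h)
      · exact Or.inl (Or.inr ⟨Q, hQ, h⟩)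
      · exact Or.inr h

theorem EarSeq.card {V : Type*} [DecidableEq V] {G : SimpleGraph V} {r : V}
    {L : List (Ear G)} {S : Finset V} (h : EarSeq G r L S) :
    S.card = 1 + (L.map fun P => P.walk.length - 1).sum := by
  induction h with
  | nil => simp
  | snoc L S P h ha hb hd ih =>
    have : S ∪ P.walk.support.toFinset = S ∪ P.internalFinset := by
      ext x
      simp only [Finset.mem_union, Ear.internalFinset, Finset.mem_sdiff, Finset.mem_insert,
        Finset.mem_singleton]
      constructor
      · rintro (h | h)
        · exact Or.inl h
        · by_cases hx : x = P.a ∨ x = P.b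
          · rcases hx with rfl | rfl
            · exact Or.inl ha
            · exact Or.inl hb
          · exact Or.inr ⟨h, hx⟩
      · rintro (h | h)
        · exact Or.inl h
        · exact Or.inr h.1
    rw [this, Finset.card_union_of_disjoint hd.symm, ih, P.card_internalFinset']
    simp
    omega

theorem mem_priorVerts' {V : Type*} {G : SimpleGraph V} (r : V) (L : List (Ear G)) (i : ℕ) (v : V) :
    v ∈ priorVerts r L i ↔ v = r ∨ ∃ P ∈ L.take i, v ∈ P.walk.support := by
  simp only [priorVerts, Set.mem_insert_iff, Set.mem_ofPred_eq, Ear.vertices]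
  refine or_congr Iff.rfl ?_
  constructor
  · rintro ⟨j, hj, hv⟩
    refine ⟨L.get j, ?_, hv⟩
    rw [List.mem_take_iff_getElem]
    exact ⟨j, by have := j.2; omega, rfl⟩
  · rintro ⟨P, hP, hv⟩
    rw [List.mem_take_iff_getElem] at hP
    obtain ⟨j, hj, rfl⟩ := hP
    exact ⟨⟨j, by omega⟩, by simp; omega, hv⟩

theorem EarSeq.props {V : Type*} [DecidableEq V] {G : SimpleGraph V} {r : V}
    {L : List (Ear G)} {S : Finset V} (h : EarSeq G r L S) (i : Fin L.length) :
    (L.get i).endpoints ⊆ priorVerts r L (i : ℕ) ∧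
    (L.get i).internal ∩ priorVerts r L (i : ℕ) = ∅ := by
  induction h with
  | nil => exact i.elim0
  | snoc L S P h ha hb hd ih =>
    obtain ⟨i, hi⟩ := i
    have hi' : i < L.length + 1 := by simpa using hi
    have key : ∀ v, v ∈ priorVerts r (L ++ [P]) i ↔ v ∈ priorVerts r L i := by
      intro v
      rw [mem_priorVerts', mem_priorVerts', List.take_append_of_le_length (by omega)]
    have key' : priorVerts r (L ++ [P]) i = priorVerts r L i := Set.ext key
    rcases Nat.lt_succ_iff_lt_or_eq.mp hi' with hlt | heq
    · have := ih ⟨i, hlt⟩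
      simp only [List.get_eq_getElem] at this ⊢
      rw [key', List.getElem_append_left hlt]
      exact this
    · subst heq
      simp only [List.get_eq_getElem]
      rw [key', List.getElem_append_right (le_refl _)]
      have key2 : ∀ v, v ∈ priorVerts r L L.length ↔ v ∈ S := by
        intro v
        rw [mem_priorVerts', h.mem_iff, List.take_length]
      simp only [Nat.sub_self, List.getElem_cons_zero]
      constructor
      · intro x hx
        simp only [Ear.endpoints, Set.mem_insert_iff, Set.mem_singleton_iff] at hx
        rw [key2]
        rcases hx with rfl | rfl <;> assumption
      · ext x
        simp only [Set.mem_inter_iff, key2, Set.mem_empty_iff_false, iff_false, not_and]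
        intro hx hS
        exact Finset.disjoint_left.mp hd ((P.mem_internalFinset' x).2 hx) hS

theorem EarDecomp.earSeq {V : Type*} [DecidableEq V] {G : SimpleGraph V} (D : EarDecomp G) (i : ℕ)
    (hi : i ≤ D.ears.length) : ∃ S, EarSeq G D.root (D.ears.take i) S := by
  induction i with
  | zero => exact ⟨_, by simpa using EarSeq.nil⟩
  | succ i ih =>
    obtain ⟨S, hS⟩ := ih (by omega)
    have hlt : i < D.ears.length := by omega
    have h1 := D.endpoints_sub ⟨i, hlt⟩
    have h2 := D.internal_new ⟨i, hlt⟩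
    have key2 : ∀ v, v ∈ priorVerts D.root D.ears i ↔ v ∈ S := by
      intro v
      rw [mem_priorVerts', hS.mem_iff]
    refine ⟨S ∪ (D.ears[i]).walk.support.toFinset, ?_⟩
    · rw [List.take_succ_eq_append_getElem hlt]
      refine EarSeq.snoc _ S _ hS ?_ ?_ ?_
      · exact (key2 _).1 (h1 (by simp [Ear.endpoints]))
      · exact (key2 _).1 (h1 (by simp [Ear.endpoints]))
      · rw [Finset.disjoint_left]
        intro x hx hxS
        have : x ∈ (∅ : Set V) := by
          rw [← h2]
          exact ⟨(Ear.mem_internalFinset' _ x).1 hx, (key2 x).2 hxS⟩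
        exact this

/-- `H` with all edges at `v` removed. -/
def delV {V : Type*} (H : SimpleGraph V) (v : V) : SimpleGraph V where
  Adj x y := H.Adj x y ∧ x ≠ v ∧ y ≠ v
  symm := ⟨fun _ _ h => ⟨h.1.symm, h.2.2, h.2.1⟩⟩
  loopless := ⟨fun _ h => h.1.ne rfl⟩

theorem delV_induce {V : Type*} {H : SimpleGraph V} {v x y : V} (h : (delV H v).Reachable x y)
    (hx : x ∈ ({v}ᶜ : Set V)) (hy : y ∈ ({v}ᶜ : Set V)) :
    (H.induce ({v}ᶜ : Set V)).Reachable ⟨x, hx⟩ ⟨y, hy⟩ := by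
  obtain ⟨w⟩ := h
  induction w with
  | nil => exact Reachable.refl _
  | cons hadj p ih =>
    have hadj' := hadj
    obtain ⟨h1, h2, h3⟩ := hadj'
    have h3' : _ ∈ ({v}ᶜ : Set V) := h3
    refine Reachable.trans (Adj.reachable ?_) (ih h3' hy)
    exact h1

theorem induce_delV {V : Type*} {H : SimpleGraph V} {v x y : V}
    (hx : x ∈ ({v}ᶜ : Set V)) (hy : y ∈ ({v}ᶜ : Set V))
    (h : (H.induce ({v}ᶜ : Set V)).Reachable ⟨x, hx⟩ ⟨y, hy⟩) :
    (delV H v).Reachable x y := by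
  let f : (H.induce ({v}ᶜ : Set V)) →g delV H v :=
    ⟨fun z => z.1, fun {a b} hab => ⟨hab, a.2, b.2⟩⟩
  exact h.map f

theorem walk_delV {V : Type*} {G H : SimpleGraph V} {v x y : V} (w : G.Walk x y)
    (he : ∀ e ∈ w.edges, e ∈ H.edgeSet) (hv : v ∉ w.support) : (delV H v).Reachable x y := by
  induction w with
  | nil => exact Reachable.refl _
  | cons hadj p ih =>
    simp only [Walk.edges_cons, List.mem_cons, Walk.support_cons, not_or] at he hv
    refine Reachable.trans (Adj.reachable ?_) (ih (fun e h => he e (Or.inr h)) hv.2)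
    refine ⟨he _ (Or.inl rfl), fun h => hv.1 h.symm, ?_⟩
    rintro rfl
    exact hv.2 p.start_mem_support

theorem path_delV {V : Type*} [DecidableEq V] {G H : SimpleGraph V} {v a b : V} (w : G.Walk a b)
    (hw : w.IsPath)
    (he : ∀ e ∈ w.edges, e ∈ H.edgeSet) (x : V) (hx : x ∈ w.support) (hxv : x ≠ v) :
    (a ≠ v ∧ (delV H v).Reachable x a) ∨ (b ≠ v ∧ (delV H v).Reachable x b) := by
  by_cases h1 : v ∈ (w.takeUntil x hx).support
  · have h2 : v ∉ (w.dropUntil x hx).support := by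
      intro h2
      rw [Walk.mem_support_iff] at h2
      rcases h2 with h2 | h2
      · exact hxv h2.symm
      have hn := hw.support_nodup
      rw [← w.take_spec hx, Walk.support_append, List.nodup_append] at hn
      exact hn.2.2 v h1 v h2 rfl
    right
    refine ⟨?_, walk_delV _ (fun e h => he e (w.edges_dropUntil_subset_edges hx h)) h2⟩
    rintro rfl
    exact h2 (Walk.end_mem_support _)
  · left
    refine ⟨?_, (walk_delV _ (fun e h => he e (w.edges_takeUntil_subset_edges hx h)) h1).symm⟩
    rintro rfl
    exact h1 (Walk.start_mem_support _)

theorem EarSeq.conn {V : Type*} [DecidableEq V] {G H : SimpleGraph V} {r : V}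
    {L : List (Ear G)} {S : Finset V} (h : EarSeq G r L S)
    (hopen : ∀ i : Fin L.length, 1 ≤ (i : ℕ) → (L.get i).IsOpen)
    (hH : ∀ P ∈ L, ¬ P.IsTrivial → ∀ e ∈ P.edges, e ∈ H.edgeSet) (v : V) :
    ∀ x ∈ S, ∀ y ∈ S, x ≠ v → y ≠ v → (delV H v).Reachable x y := by
  induction h with
  | nil =>
    intro x hx y hy _ _
    simp only [Finset.mem_singleton] at hx hy
    subst hx; subst hy
    exact Reachable.refl _
  | snoc L S P h ha hb hd ih =>
    have ih := ih (by
      intro i hi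
      have := hopen ⟨i, by simp⟩ hi
      simpa [List.getElem_append_left i.2] using this) (fun Q hQ => hH Q (by simp [hQ]))
    by_cases ht : P.IsTrivial
    · have hsub : S ∪ P.walk.support.toFinset = S := by
        rw [Finset.union_eq_left]
        intro x hx
        by_contra hxS
        have hx2 : x ∈ P.internalFinset := by
          simp only [Ear.internalFinset, Finset.mem_sdiff, Finset.mem_insert,
            Finset.mem_singleton]
          refine ⟨hx, ?_⟩
          rintro (rfl | rfl) <;> contradiction
        have := P.card_internalFinset'
        rw [show P.walk.length = 1 from ht] at this
        rw [Finset.card_eq_zero.mp this] at hx2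
        simp at hx2
      rw [hsub]
      exact ih
    have hPe := hH P (by simp) ht
    by_cases hab : P.a = P.b
    · -- closed ear
      have hL : L = [] := by
        by_contra hL
        have hpos : 0 < L.length := List.length_pos_iff.mpr hL
        have := hopen ⟨L.length, by simp⟩ hpos
        simp only [List.get_eq_getElem, List.getElem_append_right (le_refl _)] at this
        simp only [Nat.sub_self, List.getElem_cons_zero] at this
        exact this hab
      subst hL
      have hSr : ∀ x ∈ S, x = r := by
        intro x hx
        simpa using (h.mem_iff x).1 hx
      obtain ⟨a, b, w, hl, hw⟩ := P
      simp only at hab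
      subst hab
      rcases hw with hw | ⟨_, hc⟩
      · exact absurd rfl hw.1
      simp only [Walk.copy_rfl_rfl] at hc
      simp only at ha hb hPe
      have har := hSr _ ha
      subst har
      simp only [Ear.edges] at hPe
      have hsupp : ∀ x ∈ S ∪ w.support.toFinset, x ∈ w.support := by
        intro x hx
        rw [Finset.mem_union] at hx
        rcases hx with hx | hx
        · rw [hSr x hx]; exact w.start_mem_support
        · simpa using hx
      clear hd h
      have main : ∃ t, ∀ x ∈ w.support, x ≠ v → (delV H v).Reachable x t := by
        cases w with
        | nil => simp at hl
        | @cons _ u _ hadj p =>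
          rw [Walk.cons_isCycle_iff] at hc
          simp only [Walk.edges_cons, List.mem_cons] at hPe
          have hp := fun x hx hxv => path_delV (v := v) p hc.1 (fun e h => hPe e (Or.inr h)) x hx hxv
          have hin : ∀ x ∈ (Walk.cons hadj p).support, x ∈ p.support := by
            intro x hx
            rw [Walk.support_cons, List.mem_cons] at hx
            rcases hx with rfl | hx
            · exact p.end_mem_support
            · exact hx
          have hau : H.Adj a u := hPe _ (Or.inl rfl)
          by_cases hva : a = v
          · refine ⟨u, fun x hx hxv => ?_⟩
            rcases hp x (hin x hx) hxv with h | h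
            · exact h.2
            · exact absurd hva h.1
          · refine ⟨a, fun x hx hxv => ?_⟩
            rcases hp x (hin x hx) hxv with h | h
            · refine h.2.trans (Adj.reachable ?_)
              exact ⟨hau.symm, h.1, hva⟩
            · exact h.2
      obtain ⟨t, ht⟩ := main
      intro x hx y hy hxv hyv
      exact (ht x (hsupp x hx) hxv).trans (ht y (hsupp y hy) hyv).symm
    · have hw : P.walk.IsPath := by
        rcases P.ear with h | ⟨h, _⟩
        · exact h.2
        · exact absurd h hab
      have key : ∀ x ∈ S ∪ P.walk.support.toFinset, x ≠ v →
          ∃ t ∈ S, t ≠ v ∧ (delV H v).Reachable x t := by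
        intro x hx hxv
        rw [Finset.mem_union] at hx
        rcases hx with hx | hx
        · exact ⟨x, hx, hxv, Reachable.refl _⟩
        · rcases path_delV P.walk hw hPe x (by simpa using hx) hxv with h | h
          · exact ⟨_, ha, h⟩
          · exact ⟨_, hb, h⟩
      intro x hx y hy hxv hyv
      obtain ⟨t, ht, htv, h1⟩ := key x hx hxv
      obtain ⟨s, hs, hsv, h2⟩ := key y hy hyv
      exact (h1.trans (ih t ht s hs htv hsv)).trans h2.symm

theorem TwoVertexConnected.nbr {V : Type*} {H : SimpleGraph V} [Fintype V]
    (h : TwoVertexConnected H) (u x : V) (hux : u ≠ x) : ∃ y, y ≠ x ∧ H.Adj u y := by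
  classical
  obtain ⟨hc, hv⟩ := h
  have : ∃ z, z ∉ ({u, x} : Finset V) := by
    by_contra hcon
    push Not at hcon
    have h1 : (Finset.univ : Finset V) ⊆ {u, x} := fun z _ => hcon z
    have h2 := Finset.card_le_card h1
    have h3 := Finset.card_le_two (a := u) (b := x)
    rw [Nat.card_eq_fintype_card] at hc
    rw [Finset.card_univ] at h2
    omega
  obtain ⟨z, hz⟩ := this
  simp only [Finset.mem_insert, Finset.mem_singleton, not_or] at hz
  have hr := induce_delV (show u ∈ ({x}ᶜ : Set V) from hux) (show z ∈ ({x}ᶜ : Set V) from hz.2)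
    ((hv x).preconnected _ _)
  obtain ⟨w⟩ := hr
  cases w with
  | nil => exact absurd rfl hz.1
  | cons hadj p => exact ⟨_, hadj.2.2, hadj.1⟩

theorem TwoVertexConnected.exists_ne {V : Type*} {H : SimpleGraph V} [Fintype V]
    (h : TwoVertexConnected H) (u : V) : ∃ x, u ≠ x := by
  have : 1 < Fintype.card V := by
    have := h.1
    rw [Nat.card_eq_fintype_card] at this
    omega
  obtain ⟨x, hx⟩ := Fintype.exists_ne_of_one_lt_card this u
  exact ⟨x, hx.symm⟩

theorem TwoVertexConnected.two_le {V : Type*} {H : SimpleGraph V} [Fintype V] [DecidableEq V]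
    [DecidableRel H.Adj]
    (h : TwoVertexConnected H) (u : V) : 2 ≤ (H.incidenceFinset u).card := by
  obtain ⟨x, hx⟩ := h.exists_ne u
  obtain ⟨y, hy, hadj⟩ := h.nbr u x hx
  obtain ⟨z, hz, hadj2⟩ := h.nbr u y hadj.ne
  rw [card_incidenceFinset_eq_degree, ← card_neighborFinset_eq_degree]
  have : ({y, z} : Finset V) ⊆ H.neighborFinset u := by
    intro t ht
    simp only [Finset.mem_insert, Finset.mem_singleton] at ht
    rcases ht with rfl | rfl <;> simpa
  have := Finset.card_le_card this
  rwa [Finset.card_pair hz.symm] at this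

theorem first_hit {V : Type*} [DecidableEq V] {K : SimpleGraph V} (S : Finset V) {x t : V}
    (w : K.Walk x t) (ht : t ∈ S) :
    ∃ t' ∈ S, ∃ q : K.Walk x t', q.IsPath ∧ ∀ z ∈ q.support, z ∈ S → z = t' := by
  induction w with
  | nil => exact ⟨_, ht, Walk.nil, by simp, by simp⟩
  | @cons x y t h p ih =>
    by_cases hx : x ∈ S
    · exact ⟨x, hx, Walk.nil, by simp, by simp⟩
    · obtain ⟨t', ht', q, hq, hqs⟩ := ih ht
      refine ⟨t', ht', (Walk.cons h q).bypass, Walk.bypass_isPath _, ?_⟩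
      intro z hz hzS
      have := Walk.support_bypass_subset_support _ hz
      rw [Walk.support_cons, List.mem_cons] at this
      rcases this with rfl | hz
      · exact absurd hzS hx
      · exact hqs z hz hzS

theorem delV_support {V : Type*} {H : SimpleGraph V} {s x t : V} (w : (delV H s).Walk x t)
    (hx : x ≠ s) : s ∉ w.support := by
  induction w with
  | nil => simpa using hx.symm
  | cons h p ih =>
    simp only [Walk.support_cons, List.mem_cons, not_or]
    exact ⟨hx.symm, ih h.2.2⟩

theorem delV_le {V : Type*} (H : SimpleGraph V) (v : V) : delV H v ≤ H := fun _ _ h => h.1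

/-- Existence of the next nontrivial ear. -/
theorem next_ear {V : Type*} [Fintype V] [DecidableEq V] {G H : SimpleGraph V} (hHG : H ≤ G)
    (h2 : TwoVertexConnected H) (S : Finset V) (r : V) (hr : r ∈ S) (hS : S ≠ Finset.univ) :
    ∃ P : Ear G, P.a ∈ S ∧ P.b ∈ S ∧ Disjoint P.internalFinset S ∧ 2 ≤ P.walk.length ∧
      ∀ e ∈ P.edges, e ∈ H.edgeSet ∧ ∃ z ∈ e, z ∉ S := by
  -- an edge leaving `S`
  have hedge : ∃ s ∈ S, ∃ x, x ∉ S ∧ H.Adj s x := by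
    by_contra hcon
    push Not at hcon
    obtain ⟨z, hz⟩ : ∃ z, z ∉ S := by
      by_contra h
      push Not at h
      exact hS (Finset.eq_univ_iff_forall.mpr h)
    -- pick a vertex different from both `r` and `z`
    have : ∃ y, y ∉ ({r, z} : Finset V) := by
      by_contra hcon
      push Not at hcon
      have h1 : (Finset.univ : Finset V) ⊆ {r, z} := fun z _ => hcon z
      have h2' := Finset.card_le_card h1
      have h3 := Finset.card_le_two (a := r) (b := z)
      have hc := h2.1
      rw [Nat.card_eq_fintype_card] at hc
      rw [Finset.card_univ] at h2'
      omega
    obtain ⟨y, hy⟩ := this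
    simp only [Finset.mem_insert, Finset.mem_singleton, not_or] at hy
    have hreach := induce_delV (show r ∈ ({y}ᶜ : Set V) from fun h => hy.1 h.symm)
      (show z ∈ ({y}ᶜ : Set V) from fun h => hy.2 h.symm) ((h2.2 y).preconnected _ _)
    obtain ⟨w⟩ := hreach
    have : ∀ {a b : V} (w : (delV H y).Walk a b), a ∈ S → b ∈ S := by
      intro a b w
      induction w with
      | nil => exact id
      | @cons a c b h p ih =>
        intro ha
        refine ih ?_
        by_contra hc
        exact hcon a ha c hc h.1
    exact hz (this w hr)
  obtain ⟨s, hs, x, hx, hsx⟩ := hedge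
  have hxs : x ≠ s := fun h => hx (h ▸ hs)
  by_cases hone : ∃ t ∈ S, t ≠ s
  · obtain ⟨t, ht, hts⟩ := hone
    have hreach := induce_delV (show x ∈ ({s}ᶜ : Set V) from hxs)
      (show t ∈ ({s}ᶜ : Set V) from hts) ((h2.2 s).preconnected _ _)
    obtain ⟨w⟩ := hreach
    obtain ⟨t', ht', q, hq, hqs⟩ := first_hit S w ht
    have hsq := delV_support q hxs
    have hst' : s ≠ t' := by
      rintro rfl
      exact hsq q.end_mem_support
    have hle : delV H s ≤ G := (delV_le H s).trans hHG
    let W : G.Walk s t' := Walk.cons (hHG hsx) (q.mapLe hle)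
    have hWp : W.IsPath := by
      simp only [W, Walk.cons_isPath_iff]
      exact ⟨(Walk.isPath_mapLe hle).mpr hq, by simpa using hsq⟩
    refine ⟨⟨s, t', W, by simp [W], Or.inl ⟨hst', hWp⟩⟩, hs, ht', ?_, ?_, ?_⟩
    · rw [Finset.disjoint_left]
      intro z hz hzS
      simp only [Ear.internalFinset, W, Finset.mem_sdiff, List.mem_toFinset, Walk.support_cons,
        List.mem_cons, Walk.support_mapLe_eq_support, Finset.mem_insert, Finset.mem_singleton,
        not_or] at hz
      rcases hz with ⟨h1 | h1, h2, h3⟩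
      · exact h2 h1
      · exact h3 (hqs z h1 hzS)
    · simp only [W, Walk.length_cons]
      have : (q.mapLe hle).length ≠ 0 := by
        intro h0
        have := Walk.eq_of_length_eq_zero h0
        exact hx (this ▸ ht')
      omega
    · intro e he
      simp only [Ear.edges, W, Walk.edges_cons, List.mem_cons, Walk.edges_mapLe_eq_edges] at he
      rcases he with rfl | he
      · exact ⟨hsx, x, by simp, hx⟩
      · have hd := q.edges_subset_edgeSet he
        induction e with
        | _ c d =>
          have hcd : (delV H s).Adj c d := hd
          refine ⟨hcd.1, ?_⟩
          by_contra hcon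
          push Not at hcon
          have h1 := hqs c (q.fst_mem_support_of_mem_edges he) (hcon c (by simp))
          have h2 := hqs d (q.snd_mem_support_of_mem_edges he) (hcon d (by simp))
          exact hcd.ne (h1.trans h2.symm)
  · push Not at hone
    obtain ⟨y, hyx, hsy⟩ := h2.nbr s x hxs.symm
    have hreach := induce_delV (show x ∈ ({s}ᶜ : Set V) from hxs)
      (show y ∈ ({s}ᶜ : Set V) from hsy.ne.symm) ((h2.2 s).preconnected _ _)
    obtain ⟨w⟩ := hreach
    have hsq := delV_support w.bypass hxs
    have hle : delV H s ≤ G := (delV_le H s).trans hHG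
    let Q : G.Walk x y := w.bypass.mapLe hle
    have hQs : s ∉ Q.support := by simpa [Q] using hsq
    have hQp : Q.IsPath := (Walk.isPath_mapLe hle).mpr w.bypass_isPath
    let W : G.Walk s s := Walk.cons (hHG hsx) (Q.concat (hHG hsy.symm))
    have hWc : W.IsCycle := by
      simp only [W, Walk.cons_isCycle_iff]
      refine ⟨hQp.concat hQs _, ?_⟩
      rw [Walk.edges_concat]
      simp only [List.concat_eq_append, List.mem_append, List.mem_singleton, not_or]
      refine ⟨fun h => hQs (Q.fst_mem_support_of_mem_edges h), ?_⟩
      intro h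
      rw [Sym2.eq_iff] at h
      rcases h with h | h
      · exact hsy.ne h.1
      · exact hyx h.2.symm
    refine ⟨⟨s, s, W, by simp [W], Or.inr ⟨rfl, by simpa using hWc⟩⟩, hs, hs, ?_, ?_, ?_⟩
    · rw [Finset.disjoint_left]
      intro z hz hzS
      have := hone z hzS
      subst this
      simp [Ear.internalFinset] at hz
    · have := hWc.three_le_length
      simp only
      omega
    · intro e he
      simp only [Ear.edges, W, Walk.edges_cons, List.mem_cons, Walk.edges_concat,
        List.concat_eq_append, List.mem_append, List.not_mem_nil, or_false] at he
      rcases he with rfl | he | rfl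
      · exact ⟨hsx, x, by simp, hx⟩
      · simp only [Q, Walk.edges_mapLe_eq_edges] at he
        have hd := Walk.edges_subset_edgeSet _ he
        induction e with
        | _ c d =>
          have hcd : (delV H s).Adj c d := hd
          refine ⟨hcd.1, c, by simp, fun h => hcd.2.1 (hone c h)⟩
      · exact ⟨hsy.symm, y, by simp, fun h => hsy.ne (hone y h).symm⟩

/-- Edge-disjointness of the ears of a list. -/
def EdgeDisj {V : Type*} {G : SimpleGraph V} (L : List (Ear G)) : Prop :=
  L.Pairwise fun P Q => ∀ e ∈ P.edges, e ∉ Q.edges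

theorem EdgeDisj.snoc {V : Type*} {G : SimpleGraph V} {L : List (Ear G)} (h : EdgeDisj L)
    (P : Ear G) (hP : ∀ Q ∈ L, ∀ e ∈ Q.edges, e ∉ P.edges) : EdgeDisj (L ++ [P]) := by
  unfold EdgeDisj
  rw [List.pairwise_append]
  refine ⟨h, by simp, ?_⟩
  intro Q hQ R hR
  simp only [List.mem_singleton] at hR
  subst hR
  exact hP Q hQ

theorem Ear.edges_nodup' {V : Type*} {G : SimpleGraph V} (P : Ear G) : P.edges.Nodup := by
  obtain ⟨a, b, w, hl, h⟩ := P
  rcases h with ⟨hab, hp⟩ | ⟨hab, hc⟩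
  · exact hp.isTrail.edges_nodup
  · subst hab
    exact hc.isTrail.edges_nodup

theorem EdgeDisj.length_le {V : Type*} [Fintype V] [DecidableEq V] {G H : SimpleGraph V}
    {L : List (Ear G)}
    (h : EdgeDisj L) (hH : ∀ P ∈ L, ∀ e ∈ P.edges, e ∈ H.edgeSet) :
    (L.map fun P => P.walk.length).sum ≤ H.edgeSet.ncard := by
  have hnd : (L.flatMap fun P => P.edges).Nodup := by
    rw [List.nodup_flatMap]
    refine ⟨fun P _ => P.edges_nodup', ?_⟩
    refine List.Pairwise.imp ?_ h
    intro P Q hPQ e he he'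
    exact hPQ e he he'
  have hlen : (L.flatMap fun P => P.edges).length = (L.map fun P => P.walk.length).sum := by
    rw [List.length_flatMap]
    simp [Ear.edges]
  rw [← hlen, ← List.toFinset_card_of_nodup hnd, ← Set.ncard_coe_finset]
  refine Set.ncard_le_ncard ?_ (Set.toFinite _)
  intro e he
  simp only [Finset.mem_coe, List.mem_toFinset, List.mem_flatMap] at he
  obtain ⟨P, hP, he⟩ := he
  exact hH P hP e he

theorem phase_one {V : Type*} [Fintype V] [DecidableEq V] {G H : SimpleGraph V} (hHG : H ≤ G)
    (h2 : TwoVertexConnected H) (r : V) (k : ℕ) :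
    ∀ (L : List (Ear G)) (S : Finset V), EarSeq G r L S → EdgeDisj L →
      (∀ P ∈ L, ∀ e ∈ P.edges, e ∈ H.edgeSet) → Fintype.card V - S.card = k →
      ∃ L', EarSeq G r L' Finset.univ ∧ EdgeDisj L' ∧
        (∀ P ∈ L', ∀ e ∈ P.edges, e ∈ H.edgeSet) := by
  induction k using Nat.strong_induction_on with
  | _ k ih =>
    intro L S hL hd hH hk
    by_cases hS : S = Finset.univ
    · subst hS
      exact ⟨L, hL, hd, hH⟩
    · obtain ⟨P, ha, hb, hdis, hlen, hPe⟩ := next_ear hHG h2 S r ((hL.mem_iff r).2 (Or.inl rfl)) hS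
      have hL' := EarSeq.snoc L S P hL ha hb hdis
      refine ih _ ?_ (L ++ [P]) _ hL' (hd.snoc P ?_) ?_ rfl
      · have h1 := hL.card
        have h3 := hL'.card
        have h4 := Finset.card_le_univ (S ∪ P.walk.support.toFinset)
        simp only [List.map_append, List.sum_append, List.map_cons, List.map_nil, List.sum_cons,
          List.sum_nil] at h3
        omega
      · intro Q hQ e he heP
        obtain ⟨_, z, hz, hzS⟩ := hPe e heP
        refine hzS ((hL.mem_iff z).2 (Or.inr ⟨Q, hQ, ?_⟩))
        exact Walk.mem_support_of_mem_edges he hz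
      · intro Q hQ e he
        simp only [List.mem_append, List.mem_singleton] at hQ
        rcases hQ with hQ | rfl
        · exact hH Q hQ e he
        · exact (hPe e he).1

theorem phase_two {V : Type*} [Fintype V] [DecidableEq V] {G : SimpleGraph V} {r : V}
    {L : List (Ear G)} (hL : EarSeq G r L Finset.univ) (hd : EdgeDisj L)
    (F : Finset (Sym2 V)) :
    (∀ e ∈ F, e ∈ G.edgeSet) → (∀ e ∈ F, ∀ P ∈ L, e ∉ P.edges) →
    ∃ L', EarSeq G r L' Finset.univ ∧ EdgeDisj L' ∧
      (L'.countP fun P => decide (Even P.walk.length)) =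
        (L.countP fun P => decide (Even P.walk.length)) ∧
      ∀ e, (∃ P ∈ L', e ∈ P.edges) ↔ (∃ P ∈ L, e ∈ P.edges) ∨ e ∈ F := by
  induction F using Finset.induction_on with
  | empty => intro _ _; exact ⟨L, hL, hd, rfl, by simp⟩
  | insert e F heF ih =>
    intro h1 h2
    obtain ⟨L', hL', hd', hc, hcov⟩ := ih (fun f hf => h1 f (Finset.mem_insert_of_mem hf))
      (fun f hf => h2 f (Finset.mem_insert_of_mem hf))
    have he := h1 e (Finset.mem_insert_self _ _)
    have he2 := h2 e (Finset.mem_insert_self _ _)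
    induction e with
    | _ w y =>
      have hadj : G.Adj w y := he
      have hedges : ∀ f, f ∈ (trivialEar G hadj).edges ↔ f = s(w, y) := by
        intro f; simp [trivialEar, Ear.edges]
      refine ⟨L' ++ [trivialEar G hadj], ?_, ?_, ?_, ?_⟩
      · have := EarSeq.snoc L' _ (trivialEar G hadj) hL' (by simp) (by simp) (by
          have h0 := (trivialEar G hadj).card_internalFinset'
          have : (trivialEar G hadj).internalFinset = ∅ := by
            rw [← Finset.card_eq_zero, h0]; simp [trivialEar]
          rw [this]; simp)
        have hu : (Finset.univ : Finset V) ∪ (trivialEar G hadj).walk.support.toFinset =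
            Finset.univ := Finset.eq_univ_iff_forall.mpr fun z =>
              Finset.mem_union_left _ (Finset.mem_univ z)
        rwa [hu] at this
      · refine hd'.snoc _ ?_
        intro Q hQ f hf hf'
        rw [hedges] at hf'
        subst hf'
        rcases (hcov _).1 ⟨Q, hQ, hf⟩ with ⟨R, hR, hR'⟩ | h
        · exact he2 R hR hR'
        · exact heF h
      · rw [List.countP_append, hc]
        simp [trivialEar]
      · intro f
        simp only [List.mem_append, List.mem_singleton, Finset.mem_insert]
        constructor
        · rintro ⟨P, hP | rfl, hf⟩
          · rcases (hcov f).1 ⟨P, hP, hf⟩ with h | h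
            · exact Or.inl h
            · exact Or.inr (Or.inr h)
          · exact Or.inr (Or.inl ((hedges f).1 hf))
        · rintro (h | rfl | h)
          · obtain ⟨P, hP, hf⟩ := (hcov f).2 (Or.inl h)
            exact ⟨P, Or.inl hP, hf⟩
          · exact ⟨_, Or.inr rfl, (hedges _).2 rfl⟩
          · obtain ⟨P, hP, hf⟩ := (hcov f).2 (Or.inr h)
            exact ⟨P, Or.inl hP, hf⟩

theorem phi_bound {V : Type*} [Fintype V] [DecidableEq V] {G H : SimpleGraph V} (hHG : H ≤ G)
    (h2 : TwoVertexConnected H) : Fintype.card V + phi G ≤ H.edgeSet.ncard + 1 := by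
  classical
  have hne : 0 < Fintype.card V := by
    have := h2.1
    rw [Nat.card_eq_fintype_card] at this
    omega
  obtain ⟨r⟩ := Fintype.card_pos_iff.mp hne
  obtain ⟨L, hL, hd, hH⟩ := phase_one hHG h2 r _ [] {r} EarSeq.nil (by simp [EdgeDisj]) (by simp) rfl
  obtain ⟨L', hL', hd', hc, hcov⟩ := phase_two hL hd
    (G.edgeFinset.filter fun e => ∀ P ∈ L, e ∉ P.edges) (by intro e he; simpa using (Finset.mem_filter.mp he).1)
    (by intro e he; exact (Finset.mem_filter.mp he).2)
  let D : EarDecomp G :=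
    { root := r
      ears := L'
      endpoints_sub := fun i => (hL'.props i).1
      internal_new := fun i => (hL'.props i).2
      edge_cover := by
        intro e he
        have : ∃ P ∈ L', e ∈ P.edges := by
          rw [hcov]
          by_cases h : ∃ P ∈ L, e ∈ P.edges
          · exact Or.inl h
          · push Not at h
            exact Or.inr (Finset.mem_filter.mpr ⟨by simpa using he, h⟩)
        obtain ⟨P, hP, heP⟩ := this
        obtain ⟨i, rfl⟩ := List.get_of_mem hP
        refine ⟨i, heP, ?_⟩
        intro j hj
        have hpw := List.pairwise_iff_get.mp hd'
        rcases lt_trichotomy i j with h | h | h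
        · exact absurd hj (hpw i j h e heP)
        · exact h.symm
        · exact absurd heP (hpw j i h e hj) }
  have hphi : phi G ≤ D.evenEars := Nat.sInf_le ⟨D, rfl⟩
  have hev : D.evenEars = L.countP fun P => decide (Even P.walk.length) := hc
  have h1 : D.evenEars ≤ L.length := hev ▸ List.countP_le_length
  have h3 := hd.length_le hH
  have h4 := hL.card
  rw [Finset.card_univ] at h4
  have h5 : ∀ M : List (Ear G), (M.map fun P => P.walk.length).sum =
      (M.map fun P => P.walk.length - 1).sum + M.length := by
    intro M
    induction M with
    | nil => simp
    | cons P M ih =>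
      have := P.length_pos
      simp only [List.map_cons, List.sum_cons, List.length_cons, ih]
      omega
  have := h5 L
  omega

theorem EarDecomp.internal_disj {V : Type*} {G : SimpleGraph V} (D : EarDecomp G)
    (i j : Fin D.ears.length) (hij : i ≠ j) (u : V) (hi : u ∈ (D.ears.get i).internal)
    (hj : u ∈ (D.ears.get j).internal) : False := by
  wlog h : i < j generalizing i j
  · exact this j i hij.symm hj hi (lt_of_le_of_ne (not_lt.mp h) hij.symm)
  have h1 := D.internal_new j
  have : u ∈ (∅ : Set V) := by
    rw [← h1]
    refine ⟨hj, Set.mem_insert_of_mem _ ⟨i, h, hi.1⟩⟩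
  exact this

theorem short_bound {V : Type*} [Fintype V] [DecidableEq V] {G H : SimpleGraph V} (hHG : H ≤ G)
    (h2 : TwoVertexConnected H) (D : EarDecomp G) (hn : D.IsNice) :
    ∑ i : Fin D.ears.length, (if (D.ears.get i).walk.length = 2 ∨ (D.ears.get i).walk.length = 3
      then (D.ears.get i).walk.length else 0) ≤ H.edgeSet.ncard := by
  classical
  rw [← Finset.sum_filter]
  let E : Fin D.ears.length → Finset (Sym2 V) := fun i =>
    (D.ears.get i).internalFinset.biUnion fun u => H.incidenceFinset u
  have hcard : ∀ i ∈ Finset.univ.filter (fun i : Fin D.ears.length =>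
      (D.ears.get i).walk.length = 2 ∨ (D.ears.get i).walk.length = 3),
      (D.ears.get i).walk.length ≤ (E i).card := by
    intro i hi
    have hi := (Finset.mem_filter.mp hi).2
    have hc := (D.ears.get i).card_internalFinset'
    rcases hi with hi | hi
    · rw [hi] at hc ⊢
      obtain ⟨u, hu⟩ := Finset.card_eq_one.mp hc
      simp only [E, hu, Finset.singleton_biUnion]
      exact h2.two_le u
    · rw [hi] at hc ⊢
      obtain ⟨u, v, huv, hu⟩ := Finset.card_eq_two.mp hc
      simp only [E, hu, Finset.biUnion_insert, Finset.singleton_biUnion]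
      have h3 := Finset.card_union_add_card_inter (H.incidenceFinset u) (H.incidenceFinset v)
      have h4 : (H.incidenceFinset u ∩ H.incidenceFinset v).card ≤ 1 := by
        refine (Finset.card_le_card (t := {s(u, v)}) ?_).trans (by simp)
        intro e he
        simp only [Finset.mem_inter, mem_incidenceFinset, Finset.mem_singleton] at he ⊢
        exact (Sym2.mem_and_mem_iff huv).mp ⟨he.1.2, he.2.2⟩
      have h5 := h2.two_le u
      have h6 := h2.two_le v
      omega
  refine (Finset.sum_le_sum hcard).trans ?_
  rw [← Finset.card_biUnion, ← Set.ncard_coe_finset]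
  · refine Set.ncard_le_ncard ?_ (Set.toFinite _)
    intro e he
    simp only [Finset.coe_biUnion, Set.mem_iUnion, Finset.mem_coe, E, Finset.mem_biUnion,
      mem_incidenceFinset] at he
    obtain ⟨i, _, u, _, he⟩ := he
    exact he.1
  · intro i hi j hj hij
    have hi := (Finset.mem_filter.mp hi).2
    have hj := (Finset.mem_filter.mp hj).2
    rw [Function.onFun, Finset.disjoint_left]
    intro e he he'
    simp only [E, Finset.mem_biUnion, mem_incidenceFinset, Ear.mem_internalFinset'] at he he'
    obtain ⟨u, hu, heu⟩ := he
    obtain ⟨v, hv, hev⟩ := he'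
    by_cases huv : u = v
    · subst huv
      exact D.internal_disj i j hij u hu hv
    · have := (Sym2.mem_and_mem_iff huv).mp ⟨heu.2, hev.2⟩
      subst this
      exact hn.2.2 i j hij hi hj u hu v hv (hHG heu.1)

theorem countP_sum' {α : Type*} (p : α → Bool) (L : List α) :
    L.countP p = (L.map fun a => if p a then 1 else 0).sum := by
  induction L with
  | nil => simp
  | cons a L ih =>
    rw [List.countP_cons, ih]
    simp [add_comm]

end Helpers

/-- Theorem 3. For an open nice ear-decomposition `D` with exactly
`φ(G)` even ears of a 2-vertex-connected graph `G` of minimum degree at least `3`, the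
spanning subgraph `H` of `G` formed by the edges of the nontrivial ears of `D` is a
2-vertex-connected spanning subgraph with `|E(H)| ≤ (17/12)·OPT_2VC(G)`. -/
theorem statement_12 {V : Type*} [Fintype V] [DecidableEq V] (G : SimpleGraph V)
    [DecidableRel G.Adj]
    (h2 : TwoVertexConnected G) (hdeg : ∀ v : V, 3 ≤ G.degree v)
    (D : EarDecomp G) (hnice : D.IsNice) (hmin : D.evenEars = phi G) :
    SimpleGraph.fromEdgeSet (↑D.nontrivialEdges : Set (Sym2 V)) ≤ G ∧
    TwoVertexConnected (SimpleGraph.fromEdgeSet (↑D.nontrivialEdges : Set (Sym2 V))) ∧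
    (D.nontrivialEdges.card : ℚ) ≤ 17/12 * (OPT2VC G : ℚ) := by
  classical
  have hcov : ∀ x : V, ∃ P ∈ D.ears, x ∈ P.walk.support := by
    intro x
    have hpos : 0 < G.degree x := by have := hdeg x; omega
    rw [G.degree_pos_iff_exists_adj] at hpos
    obtain ⟨y, hy⟩ := hpos
    obtain ⟨i, hi, _⟩ := D.edge_cover s(x, y) hy
    exact ⟨_, List.get_mem _ i, Walk.fst_mem_support_of_mem_edges _ hi⟩
  obtain ⟨S, hS⟩ := D.earSeq D.ears.length le_rfl
  rw [List.take_length] at hS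
  have hSu : S = Finset.univ := by
    rw [Finset.eq_univ_iff_forall]
    intro x
    exact (hS.mem_iff x).2 (Or.inr (hcov x))
  subst hSu
  have hmem : ∀ e, e ∈ D.nontrivialEdges ↔
      ∃ i : Fin D.ears.length, ¬ (D.ears.get i).IsTrivial ∧ e ∈ (D.ears.get i).edges := by
    intro e
    simp [EarDecomp.nontrivialEdges]
  refine ⟨?_, ⟨h2.1, ?_⟩, ?_⟩
  · intro x y hxy
    rw [fromEdgeSet_adj] at hxy
    obtain ⟨i, _, hi⟩ := (hmem _).1 hxy.1
    exact Walk.edges_subset_edgeSet _ hi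
  · intro v
    have hconn := hS.conn (H := SimpleGraph.fromEdgeSet (↑D.nontrivialEdges : Set (Sym2 V)))
      hnice.1 (by
        intro P hP hnt e he
        obtain ⟨i, rfl⟩ := List.get_of_mem hP
        rw [edgeSet_fromEdgeSet]
        refine ⟨(hmem e).2 ⟨i, hnt, he⟩, ?_⟩
        intro hdiag
        exact G.not_isDiag_of_mem_edgeSet (Walk.edges_subset_edgeSet _ he) hdiag) v
    obtain ⟨x, hx⟩ := h2.exists_ne v
    have : Nonempty (({v}ᶜ : Set V) : Type _) := ⟨⟨x, fun h => hx h.symm⟩⟩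
    refine ⟨?_⟩
    rintro ⟨a, ha⟩ ⟨b, hb⟩
    exact delV_induce (hconn a (by simp) b (by simp) ha hb) ha hb
  · obtain ⟨H, hHG, hH2, hHc⟩ := Nat.sInf_mem
      (s := {n | ∃ H : SimpleGraph V, H ≤ G ∧ TwoVertexConnected H ∧ H.edgeSet.ncard = n})
      ⟨_, G, le_rfl, h2, rfl⟩
    have hopt : H.edgeSet.ncard = OPT2VC G := hHc
    have b1 := phi_bound hHG hH2
    have b2 := short_bound hHG hH2 D hnice
    have b3 := hS.card
    rw [hopt] at b1 b2
    rw [← hmin, EarDecomp.evenEars, countP_sum', ← Fin.sum_univ_fun_getElem] at b1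
    rw [Finset.card_univ, ← Fin.sum_univ_fun_getElem] at b3
    have b4 : D.nontrivialEdges.card ≤ ∑ i : Fin D.ears.length,
        (if (D.ears.get i).walk.length = 1 then 0 else (D.ears.get i).walk.length) := by
      have : D.nontrivialEdges ⊆ (Finset.univ.filter fun i : Fin D.ears.length =>
          ¬ (D.ears.get i).walk.length = 1).biUnion fun i => (D.ears.get i).edges.toFinset := by
        intro e he
        obtain ⟨i, h1, h3⟩ := (hmem e).1 he
        simp only [Finset.mem_biUnion, Finset.mem_filter, Finset.mem_univ, true_and,
          List.mem_toFinset]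
        exact ⟨i, h1, h3⟩
      refine (Finset.card_le_card this).trans (Finset.card_biUnion_le.trans ?_)
      rw [Finset.sum_filter]
      refine Finset.sum_le_sum fun i _ => ?_
      by_cases hi : (D.ears.get i).walk.length = 1
      · simp only [hi, not_true_eq_false, if_false, if_true, le_refl]
      · simp only [hi, not_false_eq_true, if_true, if_false]
        refine (List.toFinset_card_le _).trans ?_
        simp [Ear.edges]
    have b5 : 12 * ∑ i : Fin D.ears.length,
        (if (D.ears.get i).walk.length = 1 then 0 else (D.ears.get i).walk.length) ≤
        15 * (∑ i : Fin D.ears.length, (D.ears[(i : ℕ)].walk.length - 1) +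
          ∑ i : Fin D.ears.length, (if decide (Even D.ears[(i : ℕ)].walk.length) then 1 else 0)) +
        2 * ∑ i : Fin D.ears.length, (if (D.ears.get i).walk.length = 2 ∨
          (D.ears.get i).walk.length = 3 then (D.ears.get i).walk.length else 0) := by
      rw [← Finset.sum_add_distrib, Finset.mul_sum, Finset.mul_sum, Finset.mul_sum,
        ← Finset.sum_add_distrib]
      refine Finset.sum_le_sum fun i _ => ?_
      have hp := (D.ears.get i).length_pos
      simp only [List.get_eq_getElem, Fin.getElem_fin, decide_eq_true_eq, Nat.even_iff] at hp ⊢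
      generalize (D.ears[(i : ℕ)]).walk.length = l at hp ⊢
      split_ifs <;> omega
    have b6 : 12 * D.nontrivialEdges.card ≤ 17 * OPT2VC G := by omega
    have b7 : (12 : ℚ) * D.nontrivialEdges.card ≤ 17 * OPT2VC G := by exact_mod_cast b6
    linarith
end
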